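/- Let n ∈ ℕ, let F, h : ℝⁿ → ℝ, let x^lb, x^ub, α^F, α^H : Fin n → ℝ with x^lb_i ≤ x^ub_i, α^F_i ≥ 0 and α^H_i ≥ 0 for all i, and let X := {x ∈ ℝⁿ : x^lb_i ≤ x_i ≤ x^ub_i for all i}. Define F̆(x) := F(x) + Σ_i α^F_i (x^lb_i − x_i)(x^ub_i − x_i) and H̆(x) := −h(x) + Σ_i α^H_i (x^lb_i − x_i)(x^ub_i − x_i). Suppose that for every x ∈ X with H̆(x) ≤ 0 one has F̆(x) ≥ 0. Then for every x ∈ X with h(x) ≥ 0 one has F(x) ≥ 0. -/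

import Mathlib

section AlphaBB

variable {ι R : Type*} [Fintype ι] [Ring R]

/-- The quadratic perturbation `∑ i, αᵢ (lᵢ - xᵢ) (uᵢ - xᵢ)` by which the αBB method shifts a
function on the box `Set.Icc l u`. For `R = ℝ` it adds the constant diagonal matrix `2 diag α` to
the Hessian and vanishes at the vertices of the box. -/
def alphaBBPerturbation (α l u x : ι → R) : R :=
  ∑ i, α i * (l i - x i) * (u i - x i)

/-- The αBB underestimator `f̆` of `f` on the box `Set.Icc l u`. The weights `α` are
arbitrary, not necessarily large enough to make `f̆` convex. -/
def alphaBBUnderestimator (α l u : ι → R) (f : (ι → R) → R) (x : ι → R) : R :=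
  f x + alphaBBPerturbation α l u x

variable [PartialOrder R] [IsOrderedRing R] {α l u x : ι → R}

theorem alphaBBPerturbation_nonpos (hα : 0 ≤ α) (hx : x ∈ Set.Icc l u) :
    alphaBBPerturbation α l u x ≤ 0 :=
  Finset.sum_nonpos fun i _ ↦
    mul_nonpos_of_nonpos_of_nonneg
      (mul_nonpos_of_nonneg_of_nonpos (hα i) (sub_nonpos.mpr (hx.1 i)))
      (sub_nonneg.mpr (hx.2 i))

theorem alphaBBUnderestimator_le (f : (ι → R) → R) (hα : 0 ≤ α) (hx : x ∈ Set.Icc l u) :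
    alphaBBUnderestimator α l u f x ≤ f x :=
  add_le_of_nonpos_right (alphaBBPerturbation_nonpos hα hx)

theorem alphaBB_caseA_sound_general {F h : (ι → R) → R} {αF αH : ι → R} {X : Set (ι → R)}
    (hX : X ⊆ Set.Icc l u) (hαF : 0 ≤ αF) (hαH : 0 ≤ αH)
    (hconv : ∀ x ∈ X, alphaBBUnderestimator αH l u (-h) x ≤ 0 →
      0 ≤ alphaBBUnderestimator αF l u F x) :
    ∀ x ∈ X, 0 ≤ h x → 0 ≤ F x := by
  intro x hxX hhx
  have relaxed_feasible : alphaBBUnderestimator αH l u (-h) x ≤ 0 :=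
    (alphaBBUnderestimator_le (-h) hαH (hX hxX)).trans (neg_nonpos.mpr hhx)
  calc
    0 ≤ alphaBBUnderestimator αF l u F x := hconv x hxX relaxed_feasible
    _ ≤ F x := alphaBBUnderestimator_le F hαF (hX hxX)

end AlphaBB

/-- Correctness of Case (A) of the verification algorithm: if the αBB
convexified problem has nonnegative value over its feasible set on the
rectangle `X`, then the original objective `F` is nonnegative wherever
`h ≥ 0` on `X`. -/
theorem alphaBB_caseA_sound
    (n : ℕ) (F h : (Fin n → ℝ) → ℝ)
    (xlb xub αF αH : Fin n → ℝ)
    (hx : ∀ i, xlb i ≤ xub i)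
    (hαF : ∀ i, 0 ≤ αF i) (hαH : ∀ i, 0 ≤ αH i)
    (X : Set (Fin n → ℝ))
    (hX : X = {x | ∀ i, xlb i ≤ x i ∧ x i ≤ xub i})
    (Fbreve Hbreve : (Fin n → ℝ) → ℝ)
    (hFbreve : ∀ x, Fbreve x = F x + ∑ i, αF i * (xlb i - x i) * (xub i - x i))
    (hHbreve : ∀ x, Hbreve x = -h x + ∑ i, αH i * (xlb i - x i) * (xub i - x i))
    (hconv : ∀ x ∈ X, Hbreve x ≤ 0 → 0 ≤ Fbreve x) :
    ∀ x ∈ X, 0 ≤ h x → 0 ≤ F x := by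
  simp only [hFbreve, hHbreve] at hconv
  exact alphaBB_caseA_sound_general (hX.trans_subset fun _ ↦ forall_and.mp) hαF hαH hconv
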